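/- arXiv:1305.4444 — 2 statements merged into one kernel-verified Lean document; each statement's English description precedes it below -/
import Mathlib

section
/- Fix a matrix A₀ ∈ 𝔽_q^{(M+1)×k}. The number of matrices A ∈ 𝔽_q^{(M+1)×k} satisfying both S_M·A = S_M·A₀ and A·G' = A₀·G' is exactly q^{k-K₀}. -/
open Matrix

theorem aux_p {F : Type*} [Field F] {M : ℕ} (s : Fin M → F) :
    ∃ p : Fin (M + 1) → F, p (Fin.last M) = 1 ∧ ∀ t, ∑ j : Fin (M + 1), s t ^ (j : ℕ) * p j = 0 := by
  classical
  let P : Polynomial F := ∏ t, (Polynomial.X - Polynomial.C (s t))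
  have hm : P.Monic := Polynomial.monic_prod_of_monic _ _ fun t _ => Polynomial.monic_X_sub_C _
  have hd : P.natDegree = M := by
    simp [P, Polynomial.natDegree_finsetProd_X_sub_C_eq_card]
  refine ⟨fun j => P.coeff j, ?_, fun t => ?_⟩
  · have := hm.coeff_natDegree
    rw [hd] at this
    simpa using this
  · have h0 : P.eval (s t) = 0 := by
      simp only [P, Polynomial.eval_prod]
      exact Finset.prod_eq_zero (Finset.mem_univ t) (by simp)
    rw [Polynomial.eval_eq_sum_range, hd, ← Fin.sum_univ_eq_sum_range
      (fun j => P.coeff j * s t ^ j)] at h0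
    simpa [mul_comm] using h0

theorem aux_ker {F : Type*} [Field F] {M : ℕ} (s : Fin M → F) (hs : Function.Injective s)
    (p v : Fin (M + 1) → F) (hp1 : p (Fin.last M) = 1)
    (hp : ∀ t, ∑ j : Fin (M + 1), s t ^ (j : ℕ) * p j = 0) (hv : ∀ t, ∑ j : Fin (M + 1), s t ^ (j : ℕ) * v j = 0)
    (i : Fin (M + 1)) : v i = p i * v (Fin.last M) := by
  have key : (fun j : Fin M => v j.castSucc - p j.castSucc * v (Fin.last M)) = 0 := by
    apply Matrix.eq_zero_of_forall_index_sum_pow_mul_eq_zero hs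
    intro t
    have h1 := hv t
    have h2 := hp t
    rw [Fin.sum_univ_castSucc] at h1 h2
    simp only [Fin.val_castSucc, Fin.val_last, hp1] at h1 h2
    simp only [mul_sub, Finset.sum_sub_distrib, ← mul_assoc, ← Finset.sum_mul]
    linear_combination h1 - v (Fin.last M) * h2
  refine Fin.lastCases ?_ (fun j => ?_) i
  · simp [hp1]
  · have := congrFun key j
    simpa [sub_eq_zero] using this

/-- Fix a matrix `A₀ ∈ 𝔽_q^{(M+1)×k}`. The number of matrices
`A ∈ 𝔽_q^{(M+1)×k}` satisfying both `S_M·A = S_M·A₀` and `A·G' = A₀·G'` is exactly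
`q^(k-K₀)`, where the columns of `G'` span a subspace of dimension `K₀ ≤ k-1` and
`S_M` is the Vandermonde-type matrix built from pairwise distinct `s_1,…,s_M`. -/
theorem stmt_0 {F : Type*} [Field F] [Fintype F]
    {M k K K₀ : ℕ} (hM : 1 ≤ M) (hk : 1 ≤ k)
    (s : Fin M → F) (hs : Function.Injective s)
    (S : Matrix (Fin M) (Fin (M + 1)) F)
    (hS : ∀ t j, S t j = s t ^ (j : ℕ))
    (G' : Matrix (Fin k) (Fin K) F)
    (hK₀ : K₀ = Module.finrank F
      (Submodule.span F (Set.range fun j : Fin K => fun i : Fin k => G' i j)))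
    (hK₀k : K₀ ≤ k - 1)
    (A₀ : Matrix (Fin (M + 1)) (Fin k) F) :
    Nat.card {A : Matrix (Fin (M + 1)) (Fin k) F | S * A = S * A₀ ∧ A * G' = A₀ * G'} =
      Fintype.card F ^ (k - K₀) := by
  classical
  obtain ⟨p, hp1, hp⟩ := aux_p s
  have hSe : S = Matrix.of fun t (j : Fin (M + 1)) => s t ^ (j : ℕ) := by
    ext t j; exact hS t j
  have hSp : S *ᵥ p = 0 := by
    ext t
    simpa [hSe, Matrix.mulVec, dotProduct] using hp t
  let N := LinearMap.ker (G'ᵀ.mulVecLin)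
  have hN : ∀ v, v ∈ N ↔ v ᵥ* G' = 0 := by
    intro v
    simp [N, Matrix.mulVec_transpose]
  have e : {A : Matrix (Fin (M + 1)) (Fin k) F | S * A = S * A₀ ∧ A * G' = A₀ * G'} ≃ N :=
    { toFun := fun A => ⟨A.1 (Fin.last M) - A₀ (Fin.last M), by
        rw [hN, Matrix.sub_vecMul, sub_eq_zero]
        have := congrFun A.2.2 (Fin.last M)
        simpa [Matrix.mul_apply_eq_vecMul] using this⟩
      invFun := fun v => ⟨A₀ + Matrix.vecMulVec p v.1, by
        constructor
        · rw [Matrix.mul_add, Matrix.mul_vecMulVec, hSp]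
          simp
        · rw [Matrix.add_mul, Matrix.vecMulVec_mul, (hN _).1 v.2]
          ext i j
          simp [Matrix.vecMulVec_apply]⟩
      left_inv := by
        rintro ⟨A, hA1, hA2⟩
        apply Subtype.ext
        ext i j
        have h := aux_ker s hs p (fun i => A i j - A₀ i j) hp1 hp (by
          intro t
          have := congrFun (congrFun hA1 t) j
          simp only [Matrix.mul_apply, hS] at this
          simp only [mul_sub, Finset.sum_sub_distrib, this, sub_self]) i
        simp only [Matrix.add_apply, Matrix.vecMulVec_apply, Pi.sub_apply]
        rw [← h]; ring
      right_inv := by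
        rintro ⟨v, hv⟩
        apply Subtype.ext
        ext j
        simp [Matrix.vecMulVec_apply, hp1] }
  have hr : G'.rank = K₀ := by
    rw [hK₀, Matrix.rank_eq_finrank_span_cols]; rfl
  have hfr : Module.finrank F N = k - K₀ := by
    have h1 := LinearMap.finrank_range_add_finrank_ker (G'ᵀ.mulVecLin)
    have h2 : G'ᵀ.rank = K₀ := by rw [Matrix.rank_transpose, hr]
    unfold Matrix.rank at h2
    rw [h2] at h1
    simp only [Module.finrank_fin_fun] at h1
    change K₀ + Module.finrank F N = k at h1
    omega
  rw [Nat.card_congr e, Nat.card_eq_fintype_card, Module.card_eq_pow_finrank (K := F), hfr]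
end

section
/- Let 𝒮 = {A ∈ 𝔽_q^{(M+1)×k} : S_M·A = S_M·A₀ and A·g_j = A₀·g_j for j = 1,…,K} and define φ : 𝒮 → 𝔽_q by φ(A) = (1, s_{M+1}, s_{M+1}², …, s_{M+1}^M)·A·g_{K+1}. Then for every y ∈ 𝔽_q the fiber φ⁻¹(y) has exactly q^{k−K−1} elements; in particular φ is surjective and takes each value in 𝔽_q equally often. -/
open Matrix

theorem aux_fiber {F : Type*} [Field F] [Fintype F] {k K : ℕ}
    (g : Fin (K + 1) → (Fin k → F)) (hg : LinearIndependent F g) (b : Fin (K + 1) → F) :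
    Nat.card {r : Fin k → F | (Matrix.of g).mulVec r = b} = Fintype.card F ^ (k - K - 1) := by
  classical
  set L := (Matrix.of g).mulVecLin with hL
  have hrank : Module.finrank F (LinearMap.range L) = K + 1 := by
    have h := LinearIndependent.rank_matrix (M := Matrix.of g) hg
    simpa [Matrix.rank] using h
  have hsurj : Function.Surjective L := by
    rw [← LinearMap.range_eq_top]
    apply Submodule.eq_top_of_finrank_eq
    rw [hrank]; simp
  have hker : Module.finrank F (LinearMap.ker L) = k - K - 1 := by
    have h := LinearMap.finrank_range_add_finrank_ker L
    rw [hrank] at h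
    simp at h
    omega
  obtain ⟨r0, hr0⟩ := hsurj b
  have e : {r : Fin k → F | (Matrix.of g).mulVec r = b} ≃ LinearMap.ker L :=
    { toFun := fun r => ⟨r.1 - r0, by
        have h : L r.1 = b := r.2
        rw [LinearMap.mem_ker, map_sub, h, hr0, sub_self]⟩
      invFun := fun r => ⟨r.1 + r0, by
        have h : L r.1 = 0 := r.2
        change L (r.1 + r0) = b
        rw [map_add, h, hr0, zero_add]⟩
      left_inv := fun r => by simp
      right_inv := fun r => by simp }
  rw [Nat.card_congr e, Module.natCard_eq_pow_finrank (K := F), hker, Nat.card_eq_fintype_card]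

/-- With `𝒮 = {A : S_M·A = S_M·A₀ and A·g_j = A₀·g_j for j = 1,…,K}`
and `φ(A) = (1, s_{M+1}, …, s_{M+1}^M)·A·g_{K+1}`, every fiber `φ⁻¹(y)` has exactly
`q^(k−K−1)` elements; in particular `φ` is surjective and equidistributed.
Here `s_1,…,s_M,s_{M+1}` are pairwise distinct and `g_1,…,g_{K+1} ∈ 𝔽_q^k` are
linearly independent. -/
theorem stmt_18 {F : Type*} [Field F] [Fintype F]
    {M k K : ℕ} (hM : 1 ≤ M) (hk : 1 ≤ k) (hKk : K + 1 ≤ k)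
    (s : Fin M → F) (sN : F) (hs : Function.Injective s) (hsN : ∀ t, s t ≠ sN)
    (S : Matrix (Fin M) (Fin (M + 1)) F) (hS : ∀ t j, S t j = s t ^ (j : ℕ))
    (g : Fin (K + 1) → (Fin k → F)) (hg : LinearIndependent F g)
    (A₀ : Matrix (Fin (M + 1)) (Fin k) F) :
    ∀ y : F,
      Nat.card {A : Matrix (Fin (M + 1)) (Fin k) F |
        (S * A = S * A₀ ∧
          ∀ j : Fin K, A.mulVec (g j.castSucc) = A₀.mulVec (g j.castSucc)) ∧
        (fun t : Fin (M + 1) => sN ^ (t : ℕ)) ⬝ᵥ A.mulVec (g (Fin.last K)) = y} =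
      Fintype.card F ^ (k - K - 1) := by
  classical
  intro y
  set w : Fin (M + 1) → F := fun t => sN ^ (t : ℕ) with hw
  set V : Matrix (Fin (M + 1)) (Fin (M + 1)) F :=
    Matrix.vandermonde (Fin.snoc s sN : Fin (M + 1) → F) with hV
  have hVS : ∀ t j, V t.castSucc j = S t j := by
    intro t j; simp [hV, Matrix.vandermonde_apply, hS]
  have hVw : ∀ j, V (Fin.last M) j = w j := by
    intro j; simp [hV, Matrix.vandermonde_apply, hw]
  have hdet : IsUnit V.det := by
    rw [isUnit_iff_ne_zero, hV, Matrix.det_vandermonde_ne_zero_iff]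
    rw [Fin.snoc_injective_iff]
    refine ⟨hs, ?_⟩
    rintro ⟨t, ht⟩
    exact hsN t ht
  set u : Fin (M + 1) → F := V⁻¹.mulVec (Pi.single (Fin.last M) 1) with hu
  have hVu : V.mulVec u = Pi.single (Fin.last M) 1 := by
    rw [hu, Matrix.mulVec_mulVec, Matrix.mul_nonsing_inv _ hdet, Matrix.one_mulVec]
  have hSu : S.mulVec u = 0 := by
    funext t
    have h := congrFun hVu t.castSucc
    rw [Pi.single_eq_of_ne (Fin.castSucc_lt_last t).ne] at h
    simpa [Matrix.mulVec, dotProduct, hVS] using h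
  have hwu : w ⬝ᵥ u = 1 := by
    have h := congrFun hVu (Fin.last M)
    simpa [Matrix.mulVec, dotProduct, hVw] using h
  have hu0 : u ≠ 0 := by
    intro h; rw [h] at hwu; simp at hwu
  -- injectivity of V
  have hinj : ∀ x : Fin (M + 1) → F, S.mulVec x = 0 → x = (w ⬝ᵥ x) • u := by
    intro x hx
    have h1 : V.mulVec x = V.mulVec ((w ⬝ᵥ x) • u) := by
      rw [Matrix.mulVec_smul, hVu]
      funext i
      refine Fin.lastCases ?_ (fun t => ?_) i
      · simp [Matrix.mulVec, dotProduct, hVw]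
      · have h := congrFun hx t
        simpa [Matrix.mulVec, dotProduct, hVS, (Fin.castSucc_lt_last t).ne] using h
    have h2 := congrArg (V⁻¹.mulVec) h1
    simpa only [Matrix.mulVec_mulVec, Matrix.nonsing_inv_mul _ hdet, Matrix.one_mulVec] using h2
  set c : F := w ⬝ᵥ A₀.mulVec (g (Fin.last K)) with hc
  rw [← aux_fiber g hg (Pi.single (Fin.last K) (y - c))]
  symm
  have hvm : ∀ (r v : Fin k → F),
      (A₀ + Matrix.vecMulVec u r).mulVec v = A₀.mulVec v + (v ⬝ᵥ r) • u := by
    intro r v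
    rw [Matrix.add_mulVec, Matrix.vecMulVec_mulVec, dotProduct_comm]
    congr 1
    funext i
    simp [mul_comm]
  have hr : ∀ r : Fin k → F, (Matrix.of g).mulVec r = Pi.single (Fin.last K) (y - c) ↔
      (∀ j : Fin K, g j.castSucc ⬝ᵥ r = 0) ∧ g (Fin.last K) ⬝ᵥ r = y - c := by
    intro r
    constructor
    · intro h
      refine ⟨fun j => ?_, ?_⟩
      · have := congrFun h j.castSucc
        rwa [Pi.single_eq_of_ne (Fin.castSucc_lt_last j).ne] at this
      · have := congrFun h (Fin.last K)
        rwa [Pi.single_eq_same] at this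
    · rintro ⟨h1, h2⟩
      funext i
      refine Fin.lastCases ?_ (fun t => ?_) i
      · rw [Pi.single_eq_same]; exact h2
      · rw [Pi.single_eq_of_ne (Fin.castSucc_lt_last t).ne]; exact h1 t
  refine Nat.card_congr (Equiv.ofBijective
    (fun r => ⟨A₀ + Matrix.vecMulVec u r.1, ?_⟩) ⟨?_, ?_⟩)
  · obtain ⟨h1, h2⟩ := (hr r.1).1 r.2
    refine ⟨⟨?_, fun j => ?_⟩, ?_⟩
    · rw [Matrix.mul_add, Matrix.mul_vecMulVec, hSu, Matrix.zero_vecMulVec, add_zero]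
    · rw [hvm, h1 j, zero_smul, add_zero]
    · rw [hvm, h2, dotProduct_add, dotProduct_smul, hwu, ← hc]
      simp
  · rintro ⟨r, _⟩ ⟨r', _⟩ h
    have h' : Matrix.vecMulVec u r = Matrix.vecMulVec u r' := by
      simpa using h
    have h2 := congrArg (fun B => w ᵥ* B) h'
    simp only [Matrix.vecMul_vecMulVec, hwu, one_smul] at h2
    exact Subtype.ext h2
  · rintro ⟨A, ⟨hA1, hA2⟩, hA3⟩
    have hD : A = A₀ + Matrix.vecMulVec u (w ᵥ* (A - A₀)) := by
      have hSD : S * (A - A₀) = 0 := by rw [Matrix.mul_sub, hA1, sub_self]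
      rw [← sub_eq_iff_eq_add']
      ext i j
      have h := hinj (fun i => (A - A₀) i j) (by
        funext t; exact congrFun (congrFun hSD t) j)
      have h' := congrFun h i
      rw [Matrix.vecMulVec_apply, mul_comm]
      exact h'
    refine ⟨⟨w ᵥ* (A - A₀), ?_⟩, Subtype.ext hD.symm⟩
    refine (hr _).2 ⟨fun j => ?_, ?_⟩
    · rw [dotProduct_comm, ← Matrix.dotProduct_mulVec, Matrix.sub_mulVec, hA2 j, sub_self,
        dotProduct_zero]
    · rw [dotProduct_comm, ← Matrix.dotProduct_mulVec, Matrix.sub_mulVec, dotProduct_sub, hA3]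
end
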